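/- Let a, b be real d×d matrices, t > 0, and q_s := ∫₀ˢ exp(ub) aᵀa exp(ubᵀ) du for s ∈ [0, t]. For a real symmetric d×d matrix v, the following are equivalent: (i) I_d − 2 q_s v is invertible for all s ∈ [0, t]; (ii) I_d − 2 √(q_s) · v · √(q_s) is positive definite for all s ∈ [0, t], where √(q_s) is the positive semidefinite square root of q_s. Moreover, the set D := {v ∈ S_d(ℝ) : ∀ s ∈ [0, t], I_d − 2 q_s v is invertible} is an open convex subset of the space S_d(ℝ) of real symmetric d×d matrices. -/

import Mathlib

open Matrix MeasureTheory
open scoped MatrixOrder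

/-- The matrix `q_s := ∫₀ˢ exp(ub) aᵀa exp(ubᵀ) du` (Bochner integral, computed entrywise). -/
noncomputable def qMat {d : ℕ} (a b : Matrix (Fin d) (Fin d) ℝ) (s : ℝ) :
    Matrix (Fin d) (Fin d) ℝ :=
  Matrix.of fun i j =>
    ∫ u in (0:ℝ)..s,
      (NormedSpace.exp (u • b) * (aᵀ * a) * NormedSpace.exp (u • bᵀ)) i j

/-!
Write `r = √q`. By Sylvester's determinant identity, `1 - c q v` is invertible exactly when the
Hermitian matrix `1 - c r v r` is. A connected set of invertible Hermitian matrices which contains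
one positive definite matrix consists of positive definite matrices: positive definiteness is open
among Hermitian matrices, and also closed among the invertible ones, where it agrees with positive
semidefiniteness. As `q` runs through a connected set containing `0`, the matrices `1 - c r v r`
form a connected set containing `1`, so invertibility throughout amounts to positive definiteness
throughout. The latter condition is convex in `v`; the former is open in `v` when the matrices `q`
run through a compact set.
-/

lemma isOpen_setOf_isUnit_matrix {n R : Type*} [Fintype n] [DecidableEq n] [Field R]
    [TopologicalSpace R] [IsTopologicalRing R] [T1Space R] :
    IsOpen {A : Matrix n n R | IsUnit A} := by
  simp only [isUnit_iff_isUnit_det, isUnit_iff_ne_zero]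
  exact isOpen_compl_singleton.preimage continuous_id.matrix_det

lemma isOpen_setOf_forall_isUnit_one_sub_smul_mul {α R : Type*} [Ring R] [TopologicalSpace R]
    [IsTopologicalRing R] [SMul α R] [ContinuousConstSMul α R] (hR : IsOpen {x : R | IsUnit x})
    {K : Set R} (hK : IsCompact K) (c : α) :
    IsOpen {v : R | ∀ q ∈ K, IsUnit (1 - c • (q * v))} := by
  refine isOpen_iff_eventually.2 fun v hv =>
    hK.eventually_forall_of_forall_eventually fun q hq => ?_
  have hcont : Continuous fun p : R × R => 1 - c • (p.2 * p.1) := by fun_prop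
  exact hcont.continuousAt.eventually (hR.mem_nhds (hv q hq))

section RCLike

open scoped ComplexOrder

variable {n 𝕜 : Type*} [RCLike 𝕜]

lemma isClosed_setOf_posSemidef : IsClosed {A : Matrix n n 𝕜 | A.PosSemidef} := by
  simp only [PosSemidef, Set.ofPred_and, Set.ofPred_forall]
  refine (isClosed_eq continuous_id.matrix_conjTranspose continuous_id).inter
    (isClosed_iInter fun x => isClosed_le continuous_const ?_)
  simp only [Finsupp.sum]
  fun_prop

lemma convex_setOf_posDef : Convex ℝ {A : Matrix n n 𝕜 | A.PosDef} := by
  refine convex_iff_forall_pos.2 fun A hA B hB α β hα hβ _ => ?_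
  exact (PosDef.smul hA hα).add (PosDef.smul hB hβ)

variable [Fintype n]

lemma posDef_iff_forall_mem_sphere {A : Matrix n n 𝕜} (hA : A.IsHermitian) :
    A.PosDef ↔ ∀ x ∈ Metric.sphere (0 : n → 𝕜) 1, 0 < RCLike.re (star x ⬝ᵥ A *ᵥ x) := by
  have hre (x : n → 𝕜) : 0 < star x ⬝ᵥ A *ᵥ x ↔ 0 < RCLike.re (star x ⬝ᵥ A *ᵥ x) := by
    simp only [RCLike.pos_iff (K := 𝕜), hA.im_star_dotProduct_mulVec_self, and_true]
  simp only [posDef_iff_dotProduct_mulVec, hA, true_and, hre]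
  refine ⟨fun h x hx => h (ne_zero_of_mem_unit_sphere ⟨x, hx⟩), fun h x hx => ?_⟩
  have hnorm : 0 < ‖x‖⁻¹ := inv_pos.2 (norm_pos_iff.2 hx)
  have hscaled := h (‖x‖⁻¹ • x) (by simp [norm_smul, hx])
  simp only [star_smul, star_trivial, mulVec_smul, dotProduct_smul, smul_dotProduct,
    RCLike.smul_re] at hscaled
  exact pos_of_mul_pos_right (pos_of_mul_pos_right hscaled hnorm.le) hnorm.le

lemma isOpen_setOf_forall_mem_sphere_re_pos :
    IsOpen {A : Matrix n n 𝕜 |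
      ∀ x ∈ Metric.sphere (0 : n → 𝕜) 1, 0 < RCLike.re (star x ⬝ᵥ A *ᵥ x)} := by
  refine isOpen_iff_eventually.2 fun A hA =>
    (isCompact_sphere _ _).eventually_forall_of_forall_eventually fun x hx => ?_
  have hcont : Continuous fun p : Matrix n n 𝕜 × (n → 𝕜) =>
      RCLike.re (star p.2 ⬝ᵥ p.1 *ᵥ p.2) :=
    RCLike.continuous_re.comp
      (continuous_snd.star.dotProduct (continuous_fst.matrix_mulVec continuous_snd))
  exact hcont.continuousAt.eventually_const_lt (hA x hx)

variable [DecidableEq n]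

theorem posDef_of_isPreconnected_of_isUnit {S : Set (Matrix n n 𝕜)} (hS : IsPreconnected S)
    (hherm : ∀ A ∈ S, A.IsHermitian) (hunit : ∀ A ∈ S, IsUnit A)
    {A₀ : Matrix n n 𝕜} (hA₀ : A₀ ∈ S) (hpos : A₀.PosDef) {A : Matrix n n 𝕜} (hA : A ∈ S) :
    A.PosDef := by
  have hsphere (B) (hB : B ∈ S) := posDef_iff_forall_mem_sphere (hherm B hB)
  have hsemi (B) (hB : B ∈ S) : B.PosSemidef ↔ B.PosDef :=
    ⟨fun h => h.posDef_iff_isUnit.2 (hunit B hB), PosDef.posSemidef⟩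
  by_contra hnot
  obtain ⟨B, hB, hBpos, hBneg⟩ := hS _ _ isOpen_setOf_forall_mem_sphere_re_pos
    isClosed_setOf_posSemidef.isOpen_compl
    (fun B hB => or_iff_not_imp_right.2 fun h =>
      (hsphere B hB).1 ((hsemi B hB).1 (not_not.1 h)))
    ⟨A₀, hA₀, (hsphere A₀ hA₀).1 hpos⟩ ⟨A, hA, fun h => hnot ((hsemi A hA).1 h)⟩
  exact hBneg ((hsphere B hB).2 hBpos).posSemidef

lemma continuousOn_matrix_sqrt :
    ContinuousOn CFC.sqrt {A : Matrix n n 𝕜 | A.PosSemidef} := by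
  open scoped Matrix.Norms.L2Operator in
  -- `NormedAlgebra.restrictScalars` would equip matrices with a different real scalar action.
  let : NormedAlgebra ℝ (Matrix n n 𝕜) :=
    { norm_smul_le := fun r A => by
        rw [← algebraMap_smul 𝕜 r A]
        simpa only [norm_algebraMap'] using norm_smul_le (algebraMap ℝ 𝕜 r) A }
  simpa only [nonneg_iff_posSemidef] using CFC.continuousOn_sqrt (A := Matrix n n 𝕜)

lemma isHermitian_one_sub_smul_sqrt_mul_mul_sqrt (c : ℝ) (q : Matrix n n 𝕜) {v : Matrix n n 𝕜}
    (hv : v.IsHermitian) : (1 - c • (CFC.sqrt q * v * CFC.sqrt q)).IsHermitian := by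
  have hsqrt : (CFC.sqrt q).IsHermitian := (nonneg_iff_posSemidef.1 (CFC.sqrt_nonneg q)).isHermitian
  have hconj := isHermitian_mul_mul_conjTranspose (CFC.sqrt q) hv
  rw [hsqrt.eq] at hconj
  exact isHermitian_one.sub (hconj.smul (.all c))

lemma isUnit_one_sub_smul_mul_iff_sqrt (c : ℝ) {q : Matrix n n 𝕜} (hq : q.PosSemidef)
    (v : Matrix n n 𝕜) :
    IsUnit (1 - c • (q * v)) ↔ IsUnit (1 - c • (CFC.sqrt q * v * CFC.sqrt q)) := by
  have hfactor : c • (q * v) = CFC.sqrt q * (c • (CFC.sqrt q * v)) := by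
    rw [mul_smul_comm, ← mul_assoc, CFC.sqrt_mul_sqrt_self q hq.nonneg]
  rw [isUnit_iff_isUnit_det, isUnit_iff_isUnit_det, hfactor, det_one_sub_mul_comm, smul_mul_assoc]

theorem forall_isUnit_one_sub_iff_forall_posDef {K : Set (Matrix n n 𝕜)}
    (hpos : ∀ q ∈ K, q.PosSemidef) (hconn : IsPreconnected K) (hzero : 0 ∈ K) (c : ℝ)
    {v : Matrix n n 𝕜} (hv : v.IsHermitian) :
    (∀ q ∈ K, IsUnit (1 - c • (q * v))) ↔
      ∀ q ∈ K, (1 - c • (CFC.sqrt q * v * CFC.sqrt q)).PosDef := by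
  refine ⟨fun hunit q hq => ?_, fun h q hq =>
    (isUnit_one_sub_smul_mul_iff_sqrt c (hpos q hq) v).2 (h q hq).isUnit⟩
  let N : Matrix n n 𝕜 → Matrix n n 𝕜 := fun q => 1 - c • (CFC.sqrt q * v * CFC.sqrt q)
  have hsqrt : ContinuousOn CFC.sqrt K := continuousOn_matrix_sqrt.mono hpos
  have hN : ContinuousOn N K :=
    continuousOn_const.sub (((hsqrt.mul continuousOn_const).mul hsqrt).const_smul c)
  refine posDef_of_isPreconnected_of_isUnit (hconn.image N hN)
    (Set.forall_mem_image.2 fun q _ => isHermitian_one_sub_smul_sqrt_mul_mul_sqrt c q hv)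
    (Set.forall_mem_image.2 fun q hq =>
      (isUnit_one_sub_smul_mul_iff_sqrt c (hpos q hq) v).1 (hunit q hq))
    (Set.mem_image_of_mem N hzero) ?_ (Set.mem_image_of_mem N hq)
  simpa only [N, CFC.sqrt_zero, mul_zero, smul_zero, sub_zero] using PosDef.one

lemma convex_setOf_posDef_one_sub_smul_mul_mul (c : ℝ) (r : Matrix n n 𝕜) :
    Convex ℝ {v : Matrix n n 𝕜 | (1 - c • (r * v * r)).PosDef} :=
  (convex_setOf_posDef (n := n) (𝕜 := 𝕜)).affine_preimage
    (AffineMap.const ℝ (Matrix n n 𝕜) (1 : Matrix n n 𝕜) -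
      (c • LinearMap.mulLeftRight ℝ (r, r)).toAffineMap)

theorem convex_setOf_isHermitian_forall_isUnit {K : Set (Matrix n n 𝕜)}
    (hpos : ∀ q ∈ K, q.PosSemidef) (hconn : IsPreconnected K) (hzero : 0 ∈ K) (c : ℝ) :
    Convex ℝ {v : Matrix n n 𝕜 | v.IsHermitian ∧ ∀ q ∈ K, IsUnit (1 - c • (q * v))} := by
  have hherm : Convex ℝ {v : Matrix n n 𝕜 | v.IsHermitian} :=
    (selfAdjoint.submodule ℝ (Matrix n n 𝕜)).convex
  have hposDef : Convex ℝ
      {v : Matrix n n 𝕜 | ∀ q ∈ K, (1 - c • (CFC.sqrt q * v * CFC.sqrt q)).PosDef} := by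
    simp only [Set.ofPred_forall]
    exact convex_iInter₂ fun q _ => convex_setOf_posDef_one_sub_smul_mul_mul c (CFC.sqrt q)
  convert! hherm.inter hposDef using 1
  ext v
  exact and_congr_right (forall_isUnit_one_sub_iff_forall_posDef hpos hconn hzero c)

lemma continuous_matrix_exp : Continuous (NormedSpace.exp : Matrix n n 𝕜 → Matrix n n 𝕜) := by
  open scoped Matrix.Norms.L2Operator in
  let := NormedAlgebra.restrictScalars ℚ 𝕜 (Matrix n n 𝕜)
  exact NormedSpace.exp_continuous

theorem stmt_9_general {K : Set (Matrix n n 𝕜)} (hpos : ∀ q ∈ K, q.PosSemidef)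
    (hcomp : IsCompact K) (hconn : IsPreconnected K) (hzero : 0 ∈ K) (c : ℝ) :
    (∀ v : Matrix n n 𝕜, v.IsHermitian →
      ((∀ q ∈ K, IsUnit (1 - c • (q * v))) ↔
        ∀ q ∈ K, (1 - c • (CFC.sqrt q * v * CFC.sqrt q)).PosDef)) ∧
    (let D : Set (Matrix n n 𝕜) := {v | v.IsHermitian ∧ ∀ q ∈ K, IsUnit (1 - c • (q * v))}
     Convex ℝ D ∧ ∃ U : Set (Matrix n n 𝕜), IsOpen U ∧ D = U ∩ {v | v.IsHermitian}) :=
  ⟨fun _ => forall_isUnit_one_sub_iff_forall_posDef hpos hconn hzero c,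
    convex_setOf_isHermitian_forall_isUnit hpos hconn hzero c,
    _, isOpen_setOf_forall_isUnit_one_sub_smul_mul isOpen_setOf_isUnit_matrix hcomp c,
    Set.inter_comm _ _⟩

end RCLike

lemma qMat_zero {d : ℕ} (a b : Matrix (Fin d) (Fin d) ℝ) : qMat a b 0 = 0 := by
  ext i j
  simp [qMat]

lemma continuous_qMat {d : ℕ} (a b : Matrix (Fin d) (Fin d) ℝ) : Continuous (qMat a b) := by
  have hexp (m : Matrix (Fin d) (Fin d) ℝ) : Continuous fun u : ℝ => NormedSpace.exp (u • m) :=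
    continuous_matrix_exp.comp (continuous_id.smul continuous_const)
  have hintegrand : Continuous fun u : ℝ =>
      NormedSpace.exp (u • b) * (aᵀ * a) * NormedSpace.exp (u • bᵀ) :=
    ((hexp b).mul continuous_const).mul (hexp bᵀ)
  exact continuous_matrix fun i j => intervalIntegral.continuous_primitive
    (fun _ _ => (hintegrand.matrix_elem i j).intervalIntegrable _ _) 0

/-- For a symmetric `v`: `I − 2 q_s v` is invertible for all `s ∈ [0,t]`
iff `I − 2 √(q_s) v √(q_s)` is positive definite for all `s ∈ [0,t]`; moreover the set
`D = {v ∈ S_d(ℝ) : ∀ s ∈ [0,t], I − 2 q_s v invertible}` is convex and open in `S_d(ℝ)`. -/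
theorem stmt_9 (d : ℕ) (a b : Matrix (Fin d) (Fin d) ℝ) (t : ℝ) (ht : 0 < t)
    (hq : ∀ s ∈ Set.Icc (0:ℝ) t, (qMat a b s).PosSemidef) :
    (∀ v : Matrix (Fin d) (Fin d) ℝ, v.IsSymm →
      ((∀ s ∈ Set.Icc (0:ℝ) t, IsUnit (1 - (2:ℝ) • (qMat a b s * v))) ↔
        (∀ s, ∀ hs : s ∈ Set.Icc (0:ℝ) t,
          (1 - (2:ℝ) • (CFC.sqrt (qMat a b s) * v * CFC.sqrt (qMat a b s))).PosDef))) ∧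
    (let D : Set (Matrix (Fin d) (Fin d) ℝ) :=
      {v | v.IsSymm ∧ ∀ s ∈ Set.Icc (0:ℝ) t, IsUnit (1 - (2:ℝ) • (qMat a b s * v))}
     Convex ℝ D ∧
       ∃ U : Set (Matrix (Fin d) (Fin d) ℝ),
         IsOpen U ∧ D = U ∩ {v | v.IsSymm}) := by
  have hcont : ContinuousOn (qMat a b) (Set.Icc 0 t) := (continuous_qMat a b).continuousOn
  simpa only [Set.forall_mem_image, isHermitian_iff_isSymm] using
    stmt_9_general (Set.forall_mem_image.2 hq) (isCompact_Icc.image_of_continuousOn hcont)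
      (isPreconnected_Icc.image _ hcont) ⟨0, Set.left_mem_Icc.2 ht.le, qMat_zero a b⟩ 2
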